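/- Braunstein–Caves entropic Bell inequality: for any four jointly distributed finite random variables X0, X1, Y0, Y1, the inequality H(Y1|X1) + H(X1|Y0) + H(X0|Y1) - H(X0|Y0) ≥ 0 holds, where H(·|·) denotes the conditional Shannon entropy. -/

import Mathlib

open MeasureTheory ProbabilityTheory

/-- Shannon entropy of a finite-valued random variable `X` under the measure `μ`. -/
noncomputable def entH {Ω E : Type*} [MeasurableSpace Ω] [Fintype E]
    (μ : Measure Ω) (X : Ω → E) : ℝ :=
  ∑ e : E, Real.negMulLog (μ (X ⁻¹' {e})).toReal

/-- Mutual information `I(X : Y)`. -/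
noncomputable def mutInf {Ω E F : Type*} [MeasurableSpace Ω] [Fintype E] [Fintype F]
    (μ : Measure Ω) (X : Ω → E) (Y : Ω → F) : ℝ :=
  entH μ X + entH μ Y - entH μ (fun ω => (X ω, Y ω))

/-- Conditional Shannon entropy `H(X | Y)`. -/
noncomputable def condEnt {Ω E F : Type*} [MeasurableSpace Ω] [Fintype E] [Fintype F]
    (μ : Measure Ω) (X : Ω → E) (Y : Ω → F) : ℝ :=
  entH μ (fun ω => (X ω, Y ω)) - entH μ Y

/-- Conditional mutual information `I(X : Y | Z)`. -/
noncomputable def condMutInf {Ω E F G : Type*} [MeasurableSpace Ω]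
    [Fintype E] [Fintype F] [Fintype G]
    (μ : Measure Ω) (X : Ω → E) (Y : Ω → F) (Z : Ω → G) : ℝ :=
  entH μ (fun ω => (X ω, Z ω)) + entH μ (fun ω => (Y ω, Z ω))
    - entH μ (fun ω => (X ω, Y ω, Z ω)) - entH μ Z

/-!
Conditional entropy obeys the triangle inequality `H(X|Z) ≤ H(X|Y) + H(Y|Z)`: indeed
`H(X|Z) ≤ H(X,Y|Z) = H(X|Y,Z) + H(Y|Z)`, and `H(X|Y,Z) ≤ H(X|Y)` is the nonnegativity of
`I(X : Z | Y)`. The Bell inequality is this triangle inequality along the path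
`X0 → Y1 → X1 → Y0`. Nonnegativity of conditional mutual information is Gibbs' inequality,
comparing the joint law of `(X, Y, Z)` with the law `P(x,z) P(y,z) / P(z)` having the same pair
marginals and making `X` and `Y` conditionally independent given `Z`.
-/

theorem sum_negMulLog_le_neg_sum_mul_log {ι : Type*} (s : Finset ι) {p q : ι → ℝ}
    (hp : ∀ i ∈ s, 0 ≤ p i) (hq : ∀ i ∈ s, 0 ≤ q i) (hpq : ∀ i ∈ s, q i = 0 → p i = 0)
    (hsum : ∑ i ∈ s, q i ≤ ∑ i ∈ s, p i) :
    ∑ i ∈ s, Real.negMulLog (p i) ≤ -∑ i ∈ s, p i * Real.log (q i) := by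
  have hterm : ∀ i ∈ s, p i * Real.log (q i) + Real.negMulLog (p i) ≤ q i - p i := by
    intro i hi
    rcases (hp i hi).eq_or_lt with h | hpi
    · simpa [← h] using hq i hi
    have hqi : 0 < q i := (hq i hi).lt_of_ne' fun h => hpi.ne' (hpq i hi h)
    calc p i * Real.log (q i) + Real.negMulLog (p i) = p i * Real.log (q i / p i) := by
          rw [Real.log_div hqi.ne' hpi.ne', Real.negMulLog]; ring
      _ ≤ p i * (q i / p i - 1) := by
          gcongr
          exact Real.log_le_sub_one_of_pos (div_pos hqi hpi)
      _ = q i - p i := by field_simp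
  have htotal := Finset.sum_le_sum hterm
  rw [Finset.sum_add_distrib, Finset.sum_sub_distrib] at htotal
  linarith

section Laws

variable {Ω E F : Type*} [MeasurableSpace Ω] {μ : Measure Ω} [IsFiniteMeasure μ]

theorem measureReal_preimage_singleton_le_comp (X : Ω → E) (f : E → F) (x : E) :
    μ.real (X ⁻¹' {x}) ≤ μ.real ((fun ω => f (X ω)) ⁻¹' {f x}) :=
  measureReal_mono fun _ hω => congrArg f hω

theorem measureReal_preimage_comp_singleton_pos {X : Ω → E} {x : E}
    (hx : 0 < μ.real (X ⁻¹' {x})) (f : E → F) :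
    0 < μ.real ((fun ω => f (X ω)) ⁻¹' {f x}) :=
  hx.trans_le (measureReal_preimage_singleton_le_comp X f x)

variable [Fintype E] [MeasurableSpace E] [MeasurableSingletonClass E]

theorem sum_measureReal_preimage_singleton_eq_univ {X : Ω → E} (hX : Measurable X) :
    ∑ x, μ.real (X ⁻¹' {x}) = μ.real Set.univ := by
  simpa using sum_measureReal_preimage_singleton (μ := μ) Finset.univ
    fun x _ => hX (measurableSet_singleton x)

theorem sum_filter_measureReal_preimage_singleton [DecidableEq F] {X : Ω → E}
    (hX : Measurable X) (f : E → F) (y : F) :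
    ∑ x with f x = y, μ.real (X ⁻¹' {x}) = μ.real ((fun ω => f (X ω)) ⁻¹' {y}) := by
  rw [sum_measureReal_preimage_singleton _ fun x _ => hX (measurableSet_singleton x)]
  congr 1
  ext ω
  simp

theorem sum_measureReal_preimage_comp_singleton_mul [Fintype F] {X : Ω → E}
    (hX : Measurable X) (f : E → F) (g : F → ℝ) :
    ∑ y, μ.real ((fun ω => f (X ω)) ⁻¹' {y}) * g y = ∑ x, μ.real (X ⁻¹' {x}) * g (f x) := by
  classical
  simp only [← sum_filter_measureReal_preimage_singleton hX, Finset.sum_mul]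
  rw [← Finset.sum_fiberwise Finset.univ f]
  refine Finset.sum_congr rfl fun y _ => Finset.sum_congr rfl fun x hx => ?_
  rw [(Finset.mem_filter.1 hx).2]

theorem sum_measureReal_preimage_pair {X : Ω → E} (hX : Measurable X) (Y : Ω → F) (y : F) :
    ∑ x, μ.real ((fun ω => (X ω, Y ω)) ⁻¹' {(x, y)}) = μ.real (Y ⁻¹' {y}) := by
  have hfiber : ∀ x, (fun ω => (X ω, Y ω)) ⁻¹' {(x, y)} = X ⁻¹' {x} ∩ Y ⁻¹' {y} := fun x => by
    ext ω
    simp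
  simp only [hfiber, ← measureReal_restrict_apply (hX (measurableSet_singleton _))]
  rw [sum_measureReal_preimage_singleton_eq_univ hX, measureReal_restrict_apply_univ]

end Laws

section Entropy

variable {Ω E F : Type*} [MeasurableSpace Ω] [Fintype E] [Fintype F]

theorem entH_eq_sum_negMulLog_measureReal (μ : Measure Ω) (X : Ω → E) :
    entH μ X = ∑ x, Real.negMulLog (μ.real (X ⁻¹' {x})) :=
  rfl

variable {μ : Measure Ω} [IsFiniteMeasure μ] [MeasurableSpace E] [MeasurableSingletonClass E]

theorem entH_comp {X : Ω → E} (hX : Measurable X) (f : E → F) :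
    entH μ (fun ω => f (X ω)) =
      -∑ x, μ.real (X ⁻¹' {x}) * Real.log (μ.real ((fun ω => f (X ω)) ⁻¹' {f x})) := by
  rw [← sum_measureReal_preimage_comp_singleton_mul (μ := μ) hX f
    fun y => Real.log (μ.real ((fun ω => f (X ω)) ⁻¹' {y}))]
  simp only [entH_eq_sum_negMulLog_measureReal, Real.negMulLog, neg_mul, Finset.sum_neg_distrib]

theorem entH_comp_le {X : Ω → E} (hX : Measurable X) (f : E → F) :
    entH μ (fun ω => f (X ω)) ≤ entH μ X := by
  rw [entH_comp hX f, entH_eq_sum_negMulLog_measureReal, ← Finset.sum_neg_distrib]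
  refine Finset.sum_le_sum fun x _ => ?_
  rw [Real.negMulLog, neg_mul, neg_le_neg_iff]
  rcases (measureReal_nonneg (μ := μ) (s := X ⁻¹' {x})).eq_or_lt with h | h
  · simp [← h]
  · have hlog := Real.log_le_log h (measureReal_preimage_singleton_le_comp X f x)
    exact mul_le_mul_of_nonneg_left hlog h.le

end Entropy

section ConditionalEntropy

variable {Ω E F G : Type*} [MeasurableSpace Ω]

/-- The law `P(x,z) P(y,z) / P(z)`, which has the same `(X, Z)` and `(Y, Z)` marginals as the joint
law of `(X, Y, Z)` and makes `X` and `Y` conditionally independent given `Z`. Where `P(z) = 0` the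
division by zero gives the intended value `0`. -/
noncomputable def condIndepLaw (μ : Measure Ω) (X : Ω → E) (Y : Ω → F) (Z : Ω → G)
    (w : E × F × G) : ℝ :=
  μ.real ((fun ω => (X ω, Z ω)) ⁻¹' {(w.1, w.2.2)}) *
    μ.real ((fun ω => (Y ω, Z ω)) ⁻¹' {w.2}) / μ.real (Z ⁻¹' {w.2.2})

theorem condIndepLaw_nonneg (μ : Measure Ω) (X : Ω → E) (Y : Ω → F) (Z : Ω → G)
    (w : E × F × G) : 0 ≤ condIndepLaw μ X Y Z w := by
  unfold condIndepLaw
  positivity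

variable {μ : Measure Ω} [IsFiniteMeasure μ]
  {X : Ω → E} {Y : Ω → F} {Z : Ω → G}

theorem condIndepLaw_pos {w : E × F × G}
    (hw : 0 < μ.real ((fun ω => (X ω, Y ω, Z ω)) ⁻¹' {w})) : 0 < condIndepLaw μ X Y Z w :=
  div_pos
    (mul_pos (measureReal_preimage_comp_singleton_pos hw fun v => (v.1, v.2.2))
      (measureReal_preimage_comp_singleton_pos hw Prod.snd))
    (measureReal_preimage_comp_singleton_pos hw fun v => v.2.2)

theorem log_condIndepLaw {w : E × F × G}
    (hw : 0 < μ.real ((fun ω => (X ω, Y ω, Z ω)) ⁻¹' {w})) :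
    Real.log (condIndepLaw μ X Y Z w) =
      Real.log (μ.real ((fun ω => (X ω, Z ω)) ⁻¹' {(w.1, w.2.2)})) +
        Real.log (μ.real ((fun ω => (Y ω, Z ω)) ⁻¹' {w.2})) -
        Real.log (μ.real (Z ⁻¹' {w.2.2})) := by
  have hXZ := measureReal_preimage_comp_singleton_pos hw fun v => (v.1, v.2.2)
  have hYZ := measureReal_preimage_comp_singleton_pos hw Prod.snd
  have hZ := measureReal_preimage_comp_singleton_pos hw fun v => v.2.2
  rw [condIndepLaw, Real.log_div (mul_pos hXZ hYZ).ne' hZ.ne', Real.log_mul hXZ.ne' hYZ.ne']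

variable [Fintype E] [MeasurableSpace E] [MeasurableSingletonClass E]
  [Fintype F] [MeasurableSpace F] [MeasurableSingletonClass F]
  [Fintype G] [MeasurableSpace G] [MeasurableSingletonClass G]

theorem sum_condIndepLaw (hX : Measurable X) (hY : Measurable Y) (hZ : Measurable Z) :
    ∑ w, condIndepLaw μ X Y Z w = μ.real Set.univ := by
  calc ∑ w, condIndepLaw μ X Y Z w
      = ∑ z, (∑ x, μ.real ((fun ω => (X ω, Z ω)) ⁻¹' {(x, z)})) *
          (∑ y, μ.real ((fun ω => (Y ω, Z ω)) ⁻¹' {(y, z)})) / μ.real (Z ⁻¹' {z}) := by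
        simp only [condIndepLaw, Fintype.sum_prod_type_right, Finset.sum_mul_sum,
          Finset.sum_div]
        exact Finset.sum_congr rfl fun z _ => Finset.sum_comm
    _ = ∑ z, μ.real (Z ⁻¹' {z}) := by
        simp only [sum_measureReal_preimage_pair hX, sum_measureReal_preimage_pair hY,
          mul_self_div_self]
    _ = μ.real Set.univ := sum_measureReal_preimage_singleton_eq_univ hZ

theorem neg_sum_mul_log_condIndepLaw (hX : Measurable X) (hY : Measurable Y)
    (hZ : Measurable Z) :
    -∑ w, μ.real ((fun ω => (X ω, Y ω, Z ω)) ⁻¹' {w}) * Real.log (condIndepLaw μ X Y Z w) =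
      entH μ (fun ω => (X ω, Z ω)) + entH μ (fun ω => (Y ω, Z ω)) - entH μ Z := by
  have hXYZ := hX.prodMk (hY.prodMk hZ)
  have hterm : ∀ w, μ.real ((fun ω => (X ω, Y ω, Z ω)) ⁻¹' {w}) *
      Real.log (condIndepLaw μ X Y Z w) =
      μ.real ((fun ω => (X ω, Y ω, Z ω)) ⁻¹' {w}) *
        (Real.log (μ.real ((fun ω => (X ω, Z ω)) ⁻¹' {(w.1, w.2.2)})) +
          Real.log (μ.real ((fun ω => (Y ω, Z ω)) ⁻¹' {w.2})) -
          Real.log (μ.real (Z ⁻¹' {w.2.2}))) := by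
    intro w
    rcases (measureReal_nonneg (μ := μ)
      (s := (fun ω => (X ω, Y ω, Z ω)) ⁻¹' {w})).eq_or_lt with h | h
    · simp only [← h, zero_mul]
    · rw [log_condIndepLaw h]
  rw [entH_comp hXYZ fun w => (w.1, w.2.2), entH_comp hXYZ Prod.snd,
    entH_comp hXYZ fun w => w.2.2]
  simp only [hterm, mul_add, mul_sub, Finset.sum_add_distrib, Finset.sum_sub_distrib]
  ring

theorem condMutInf_nonneg (hX : Measurable X) (hY : Measurable Y) (hZ : Measurable Z) :
    0 ≤ condMutInf μ X Y Z := by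
  have gibbs : entH μ (fun ω => (X ω, Y ω, Z ω)) ≤
      -∑ w, μ.real ((fun ω => (X ω, Y ω, Z ω)) ⁻¹' {w}) * Real.log (condIndepLaw μ X Y Z w) := by
    rw [entH_eq_sum_negMulLog_measureReal]
    refine sum_negMulLog_le_neg_sum_mul_log _ (fun _ _ => measureReal_nonneg)
      (fun w _ => condIndepLaw_nonneg μ X Y Z w) (fun w _ hw => ?_) ?_
    · by_contra h
      exact (condIndepLaw_pos (measureReal_nonneg.lt_of_ne' h)).ne' hw
    · rw [sum_condIndepLaw hX hY hZ,
        sum_measureReal_preimage_singleton_eq_univ (hX.prodMk (hY.prodMk hZ))]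
  rw [neg_sum_mul_log_condIndepLaw hX hY hZ] at gibbs
  unfold condMutInf
  linarith

theorem condEnt_triangle (hX : Measurable X) (hY : Measurable Y) (hZ : Measurable Z) :
    condEnt μ X Z ≤ condEnt μ X Y + condEnt μ Y Z := by
  have hmono : entH μ (fun ω => (X ω, Z ω)) ≤ entH μ (fun ω => (X ω, Z ω, Y ω)) :=
    entH_comp_le (hX.prodMk (hZ.prodMk hY)) fun w => (w.1, w.2.1)
  have hswap : entH μ (fun ω => (Z ω, Y ω)) ≤ entH μ (fun ω => (Y ω, Z ω)) :=
    entH_comp_le (hY.prodMk hZ) Prod.swap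
  have hcond : 0 ≤ condMutInf μ X Z Y := condMutInf_nonneg hX hZ hY
  unfold condMutInf at hcond
  unfold condEnt
  linarith

end ConditionalEntropy

theorem braunstein_caves_inequality_general {Ω E0 E1 F0 F1 : Type*} [MeasurableSpace Ω]
    [Fintype E0] [Fintype E1] [Fintype F0] [Fintype F1]
    [MeasurableSpace E0] [MeasurableSingletonClass E0]
    [MeasurableSpace E1] [MeasurableSingletonClass E1]
    [MeasurableSpace F0] [MeasurableSingletonClass F0]
    [MeasurableSpace F1] [MeasurableSingletonClass F1]
    (μ : Measure Ω) [IsFiniteMeasure μ]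
    (X0 : Ω → E0) (X1 : Ω → E1) (Y0 : Ω → F0) (Y1 : Ω → F1)
    (hX0 : Measurable X0) (hX1 : Measurable X1)
    (hY0 : Measurable Y0) (hY1 : Measurable Y1) :
    0 ≤ condEnt μ Y1 X1 + condEnt μ X1 Y0 + condEnt μ X0 Y1 - condEnt μ X0 Y0 := by
  have hX0Y0 := condEnt_triangle (μ := μ) hX0 hY1 hY0
  have hY1Y0 := condEnt_triangle (μ := μ) hY1 hX1 hY0
  linarith

/-- **Braunstein–Caves entropic Bell inequality**: for any four jointly distributed
finite random variables `X0, X1, Y0, Y1`,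
`H(Y1|X1) + H(X1|Y0) + H(X0|Y1) - H(X0|Y0) ≥ 0`. -/
theorem braunstein_caves_inequality {Ω E0 E1 F0 F1 : Type*} [MeasurableSpace Ω]
    [Fintype E0] [Fintype E1] [Fintype F0] [Fintype F1]
    [MeasurableSpace E0] [MeasurableSingletonClass E0]
    [MeasurableSpace E1] [MeasurableSingletonClass E1]
    [MeasurableSpace F0] [MeasurableSingletonClass F0]
    [MeasurableSpace F1] [MeasurableSingletonClass F1]
    (μ : Measure Ω) [IsProbabilityMeasure μ]
    (X0 : Ω → E0) (X1 : Ω → E1) (Y0 : Ω → F0) (Y1 : Ω → F1)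
    (hX0 : Measurable X0) (hX1 : Measurable X1)
    (hY0 : Measurable Y0) (hY1 : Measurable Y1) :
    0 ≤ condEnt μ Y1 X1 + condEnt μ X1 Y0 + condEnt μ X0 Y1 - condEnt μ X0 Y0 :=
  braunstein_caves_inequality_general μ X0 X1 Y0 Y1 hX0 hX1 hY0 hY1
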